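/- Let P ⊂ ℝ² be a bounded indecomposable set of finite perimeter. Then the essential diameter of P is at most the perimeter of P, i.e., diam(P) ≤ H¹(∂*P). -/

import Mathlib

/-!
Project `P` onto the line through two points of the support of `volume.restrict P`. The projection
is `1`-Lipschitz, so it is enough that almost every perpendicular separating the two points meets
`∂*P`. On a perpendicular missing `∂*P` every point has density `0` or `1`. If the density were `0`
everywhere on it, then cutting `P` along the perpendicular would split the perimeter, against
indecomposability.

To see that the density is a.e. constant on such lines, write the points of density `1` and those
of density `0` as countable unions of closed sets on which the density estimate is uniform in the
radius. By Baire's theorem, on a line where both occur, some point of one kind has a one-sided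
neighbourhood made of points of the other kind. Choosing among nearby lines an almost highest such
point shows, by Fubini and Lebesgue's density theorem, that this happens only on a null set of
lines. The constant value is `0` on a.e. line because `P` has finite area.
-/

open Metric Set MeasureTheory Filter

noncomputable section

abbrev E2 := EuclideanSpace ℝ (Fin 2)

/-- The density ratio of `P` in the ball `B(x,r)`. -/
noncomputable def ballDensity (P : Set E2) (x : E2) (r : ℝ) : ℝ :=
  (volume (P ∩ ball x r)).toReal / (volume (ball x r)).toReal

/-- The essential (measure-theoretic) boundary `∂*P`: points where the density of `P`
tends neither to `0` nor to `1`. -/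
def essentialBoundary (P : Set E2) : Set E2 :=
  {x | ¬ Tendsto (ballDensity P x) (nhdsWithin 0 (Ioi 0)) (nhds 0) ∧
       ¬ Tendsto (ballDensity P x) (nhdsWithin 0 (Ioi 0)) (nhds 1)}

/-- `P` is indecomposable: it cannot be split into two disjoint pieces of positive measure
whose perimeters add up to the perimeter of `P`. -/
def Indecomposable (P : Set E2) : Prop :=
  ¬ ∃ P1 P2 : Set E2, MeasurableSet P1 ∧ MeasurableSet P2 ∧ P = P1 ∪ P2 ∧ P1 ∩ P2 = ∅ ∧
      0 < volume P1 ∧ 0 < volume P2 ∧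
      μH[1] (essentialBoundary P) =
        μH[1] (essentialBoundary P1) + μH[1] (essentialBoundary P2)

/-- The essential diameter `ess sup {|x - y| : x, y ∈ P}`. -/
noncomputable def essDiam (P : Set E2) : ℝ :=
  sInf {d : ℝ | 0 ≤ d ∧ ∃ N : Set E2, volume N = 0 ∧
    ∀ x ∈ P \ N, ∀ y ∈ P \ N, dist x y ≤ d}

open scoped Topology ENNReal

section Density

variable {X : Type*} [MetricSpace X] [SecondCountableTopology X] [MeasurableSpace X] [BorelSpace X]
  [HasBesicovitchCovering X] {μ : Measure X} [IsLocallyFiniteMeasure μ]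

lemma measure_eq_zero_of_frequently_inter_closedBall_le {s : Set X} {θ : ℝ≥0∞} (hθ : θ < 1)
    (h : ∀ x ∈ s, ∃ᶠ r in 𝓝[>] 0, μ (s ∩ closedBall x r) ≤ θ * μ (closedBall x r)) :
    μ s = 0 := by
  rw [measure_eq_zero_iff_ae_notMem]
  filter_upwards [ae_imp_of_ae_restrict (Besicovitch.ae_tendsto_measure_inter_div μ s)]
    with x hx hxs
  obtain ⟨r, hle, hlt⟩ := ((h x hxs).and_eventually ((hx hxs).eventually_const_lt hθ)).exists
  exact hlt.not_ge (ENNReal.div_le_of_le_mul hle)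

end Density

lemma mul_measure_le_measure_prod {α β : Type*} [MeasurableSpace α] [MeasurableSpace β]
    {μ : Measure α} {ν : Measure β} [SFinite ν] {W : Set (α × β)} (hW : MeasurableSet W)
    {S : Set α} {c : ℝ≥0∞} (h : ∀ t ∈ S, c ≤ ν (Prod.mk t ⁻¹' W)) :
    c * μ S ≤ μ.prod ν W :=
  calc c * μ S ≤ c * μ {t | c ≤ ν (Prod.mk t ⁻¹' W)} := by gcongr; exact h
    _ ≤ ∫⁻ t, ν (Prod.mk t ⁻¹' W) ∂μ :=
        mul_meas_ge_le_lintegral (measurable_measure_prodMk_left hW) c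
    _ = μ.prod ν W := (Measure.prod_apply hW).symm

lemma interior_nonempty_or_of_isGδ {Y : Type*} [TopologicalSpace Y] [BaireSpace Y] [Nonempty Y]
    {S : Set Y} (hS : IsGδ S) (hS' : IsGδ Sᶜ) : (interior S).Nonempty ∨ (interior Sᶜ).Nonempty := by
  by_contra! h
  have hdense : Dense (Sᶜ ∩ S) := Dense.inter_of_Gδ hS' hS
    (interior_eq_empty_iff_dense_compl.1 h.1)
    (by simpa using interior_eq_empty_iff_dense_compl.1 h.2)
  simpa using hdense.nonempty

section OneSided

variable {X : Type*} [LinearOrder X] [TopologicalSpace X] [OrderTopology X] [CompactIccSpace X]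
  {A : Set X} {x y : X}

lemma exists_mem_compl_mem_nhdsGT (hx : x ∈ A) (hy : y ∉ A) (hxy : x ≤ y)
    (h : closure A ∩ Icc x y ⊆ A) : ∃ a ∈ A, Aᶜ ∈ 𝓝[>] a := by
  obtain ⟨a, ⟨haA, hxa, hay⟩, hmax⟩ :=
    (isCompact_Icc.inter_left isClosed_closure).exists_isGreatest
      ⟨x, subset_closure hx, left_mem_Icc.2 hxy⟩
  have haA : a ∈ A := h ⟨haA, hxa, hay⟩
  have hay : a < y := hay.lt_of_ne (ne_of_mem_of_not_mem haA hy)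
  refine ⟨a, haA, mem_of_superset (Ioc_mem_nhdsGT hay) fun z hz hzA ↦ hz.1.not_ge ?_⟩
  exact hmax ⟨subset_closure hzA, hxa.trans hz.1.le, hz.2⟩

lemma exists_mem_compl_mem_nhdsLT (hx : x ∈ A) (hy : y ∉ A) (hyx : y ≤ x)
    (h : closure A ∩ Icc y x ⊆ A) : ∃ a ∈ A, Aᶜ ∈ 𝓝[<] a :=
  exists_mem_compl_mem_nhdsGT (X := Xᵒᵈ) hx hy hyx fun _ hz ↦ h ⟨hz.1, hz.2.2, hz.2.1⟩

lemma exists_mem_compl_mem_nhdsGT_or_nhdsLT {U : Set X} (hU : IsOpen U)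
    (hne : (frontier A ∩ U).Nonempty) (hAU : frontier A ∩ U ⊆ A) :
    ∃ a ∈ A, Aᶜ ∈ 𝓝[>] a ∨ Aᶜ ∈ 𝓝[<] a := by
  obtain ⟨x, hxA, hxU⟩ := hne
  have hclosure : closure A ∩ U ⊆ A := by
    rw [closure_eq_interior_union_frontier, union_inter_distrib_right]
    exact union_subset (inter_subset_left.trans interior_subset) hAU
  obtain ⟨y, hxy, hy⟩ := mem_closure_iff_nhds.1 (frontier_eq_closure_inter_closure.subset hxA).2 _
    (ordConnectedComponent_mem_nhds.2 (hU.mem_nhds hxU))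
  have hsub : closure A ∩ uIcc x y ⊆ A := (inter_subset_inter_right _ hxy).trans hclosure
  have hx : x ∈ A := hAU ⟨hxA, hxU⟩
  rcases le_total x y with hle | hle
  · rw [uIcc_of_le hle] at hsub
    obtain ⟨a, ha, h⟩ := exists_mem_compl_mem_nhdsGT hx hy hle hsub
    exact ⟨a, ha, .inl h⟩
  · rw [uIcc_of_ge hle] at hsub
    obtain ⟨a, ha, h⟩ := exists_mem_compl_mem_nhdsLT hx hy hle hsub
    exact ⟨a, ha, .inr h⟩

lemma exists_compl_mem_nhdsGT_or_nhdsLT_of_isGδ [LocallyCompactSpace X] (hA : IsGδ A)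
    (hA' : IsGδ Aᶜ) (hne : (frontier A).Nonempty) :
    (∃ a ∈ A, Aᶜ ∈ 𝓝[>] a ∨ Aᶜ ∈ 𝓝[<] a) ∨ ∃ a ∈ Aᶜ, A ∈ 𝓝[>] a ∨ A ∈ 𝓝[<] a := by
  have : Nonempty (frontier A) := hne.to_subtype
  have : LocallyCompactSpace (frontier A) := isClosed_frontier.locallyCompactSpace
  have exists_open {S : Set X} (hS : (interior ((↑) ⁻¹' S : Set (frontier A))).Nonempty) :
      ∃ U, IsOpen U ∧ (frontier A ∩ U).Nonempty ∧ frontier A ∩ U ⊆ S := by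
    obtain ⟨z, hz⟩ := hS
    obtain ⟨V, hVS, ⟨U, hU, rfl⟩, hzU⟩ := mem_interior.1 hz
    exact ⟨U, hU, ⟨z, z.2, hzU⟩, fun w hw ↦ @hVS ⟨w, hw.1⟩ hw.2⟩
  rcases interior_nonempty_or_of_isGδ (hA.preimage continuous_subtype_val)
    (hA'.preimage (continuous_subtype_val (p := (· ∈ frontier A)))) with h | h
  · obtain ⟨U, hU, hFU, hUA⟩ := exists_open h
    exact .inl (exists_mem_compl_mem_nhdsGT_or_nhdsLT hU hFU hUA)
  · obtain ⟨U, hU, hFU, hUA⟩ := exists_open (S := Aᶜ) h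
    rw [← frontier_compl] at hFU hUA
    simpa using Or.inr (exists_mem_compl_mem_nhdsGT_or_nhdsLT hU hFU hUA)

end OneSided

section ThickPoints

/-- The points `z` of the plane such that, for all `r < δ`, the set `Q` misses at most `1 / 32` of
the area `(2 * r) ^ 2` of the square `closedBall z r`. Fixing the scale `δ` makes this a closed
condition on `z`. -/
def thickPointsAt (Q : Set (ℝ × ℝ)) (δ : ℝ) : Set (ℝ × ℝ) :=
  {z | ∀ r ∈ Ioo 0 δ, volume (closedBall z r \ Q) ≤ ENNReal.ofReal (r ^ 2 / 8)}

/-- The points of the plane at which the complement of `Q` has upper density at most `1 / 32`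
with respect to squares, a threshold that every point of density `1` meets. -/
def thickPoints (Q : Set (ℝ × ℝ)) : Set (ℝ × ℝ) :=
  {z | ∀ᶠ r in 𝓝[>] (0 : ℝ), volume (closedBall z r \ Q) ≤ ENNReal.ofReal (r ^ 2 / 8)}

variable {Q : Set (ℝ × ℝ)}

lemma volume_closedBall_prod (z : ℝ × ℝ) {r : ℝ} (hr : 0 ≤ r) :
    volume (closedBall z r) = ENNReal.ofReal (4 * r ^ 2) := by
  rw [← closedBall_prod_same, Measure.volume_eq_prod, Measure.prod_prod, Real.volume_closedBall,
    Real.volume_closedBall, ← ENNReal.ofReal_mul (by positivity)]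
  ring_nf

lemma thickPointsAt_anti : Antitone (thickPointsAt Q) :=
  fun _ _ hδ _ hz r hr ↦ hz r ⟨hr.1, hr.2.trans_le hδ⟩

lemma mem_thickPoints_iff {z : ℝ × ℝ} : z ∈ thickPoints Q ↔ ∃ δ > 0, z ∈ thickPointsAt Q δ :=
  (nhdsGT_basis 0).eventually_iff

lemma thickPoints_eq_iUnion : thickPoints Q = ⋃ n : ℕ, thickPointsAt Q (1 / (n + 1)) := by
  ext z
  rw [mem_thickPoints_iff, mem_iUnion]
  constructor
  · rintro ⟨δ, hδ, hz⟩
    obtain ⟨n, hn⟩ := exists_nat_one_div_lt hδ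
    exact ⟨n, thickPointsAt_anti hn.le hz⟩
  · rintro ⟨n, hz⟩
    exact ⟨_, Nat.one_div_pos_of_nat, hz⟩

lemma isClosed_thickPointsAt (Q : Set (ℝ × ℝ)) (δ : ℝ) : IsClosed (thickPointsAt Q δ) := by
  refine isClosed_of_closure_subset fun z hz r hr ↦ ?_
  have hlim : Tendsto (fun d ↦ ENNReal.ofReal ((r + d) ^ 2 / 8)) (𝓝[>] 0)
      (𝓝 (ENNReal.ofReal (r ^ 2 / 8))) := by
    refine (Continuous.tendsto' ?_ 0 _ (by simp)).mono_left nhdsWithin_le_nhds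
    exact ENNReal.continuous_ofReal.comp (by fun_prop)
  refine ge_of_tendsto hlim ?_
  filter_upwards [Ioo_mem_nhdsGT (sub_pos.2 hr.2)] with d hd
  obtain ⟨w, hw, hzw⟩ := Metric.mem_closure_iff.1 hz d hd.1
  have hsub : closedBall z r ⊆ closedBall w (r + d) := closedBall_subset_closedBall' (by gcongr)
  exact (measure_mono (sdiff_subset_sdiff_left hsub)).trans
    (hw (r + d) ⟨add_pos hr.1 hd.1, by linarith [hd.2]⟩)

lemma isGδ_compl_thickPoints (Q : Set (ℝ × ℝ)) : IsGδ (thickPoints Q)ᶜ := by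
  rw [thickPoints_eq_iUnion, compl_iUnion]
  exact .iInter_of_isOpen fun n ↦ (isClosed_thickPointsAt Q _).isOpen_compl

lemma disjoint_thickPoints_compl (Q : Set (ℝ × ℝ)) :
    Disjoint (thickPoints Q) (thickPoints Qᶜ) := by
  refine disjoint_left.2 fun z (hz : ∀ᶠ r in 𝓝[>] (0 : ℝ), _) (hz' : ∀ᶠ r in 𝓝[>] (0 : ℝ), _) ↦ ?_
  obtain ⟨r, ⟨hle, hle'⟩, hr : 0 < r⟩ := ((hz.and hz').and self_mem_nhdsWithin).exists
  have hsum : volume (closedBall z r) ≤ ENNReal.ofReal (r ^ 2 / 8 + r ^ 2 / 8) := by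
    rw [ENNReal.ofReal_add (by positivity) (by positivity)]
    refine (measure_le_inter_add_sdiff volume _ Q).trans ?_
    rw [← Set.sdiff_compl, add_comm]
    gcongr
  rw [volume_closedBall_prod z hr.le, ENNReal.ofReal_le_ofReal_iff (by positivity)] at hsum
  linarith [pow_pos hr 2]

lemma volume_inter_thickPoints_compl (Q : Set (ℝ × ℝ)) : volume (Q ∩ thickPoints Qᶜ) = 0 := by
  refine measure_eq_zero_of_frequently_inter_closedBall_le (θ := ENNReal.ofReal (1 / 32))
    (by norm_num) fun z hz ↦ Eventually.frequently ?_
  filter_upwards [hz.2, self_mem_nhdsWithin] with r hle (hr : 0 < r)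
  rw [volume_closedBall_prod z hr.le, ← ENNReal.ofReal_mul (by norm_num)]
  calc volume (Q ∩ thickPoints Qᶜ ∩ closedBall z r)
      ≤ volume (closedBall z r \ Qᶜ) := by
        rw [Set.sdiff_compl]
        exact measure_mono fun w hw ↦ ⟨hw.2, hw.1.1⟩
    _ ≤ ENNReal.ofReal (r ^ 2 / 8) := hle
    _ = ENNReal.ofReal (1 / 32 * (4 * r ^ 2)) := by ring_nf

lemma ae_ae_notMem_thickPoints_compl (Q : Set (ℝ × ℝ)) :
    ∀ᵐ t : ℝ, ∀ᵐ s : ℝ, (t, s) ∈ Q → (t, s) ∉ thickPoints Qᶜ := by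
  refine Measure.ae_ae_of_ae_prod (p := fun z ↦ z ∈ Q → z ∉ thickPoints Qᶜ) ?_
  filter_upwards [measure_eq_zero_iff_ae_notMem.1 (volume_inter_thickPoints_compl Q)]
    with z hz hzQ hz' using hz ⟨hzQ, hz'⟩

lemma ae_exists_notMem_thickPoints (hQ : MeasurableSet Q) (hvol : volume Q ≠ ∞) :
    ∀ᵐ t : ℝ, ∃ s : ℝ, (t, s) ∉ thickPoints Q := by
  filter_upwards [Measure.ae_measure_lt_top hQ hvol, ae_ae_notMem_thickPoints_compl Qᶜ]
    with t hfin hae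
  have hfreq : ∃ᶠ s : ℝ in ae volume, (t, s) ∉ Q := by
    refine frequently_ae_iff.2 fun h ↦ ?_
    have huniv : volume (univ : Set ℝ) < ∞ := by
      rw [← measure_add_measure_compl (measurable_prodMk_left hQ : MeasurableSet (Prod.mk t ⁻¹' Q))]
      exact ENNReal.add_lt_top.2 ⟨hfin, h.trans_lt ENNReal.zero_lt_top⟩
    simp at huniv
  obtain ⟨s, hs, hs'⟩ := (hfreq.and_eventually hae).exists
  exact ⟨s, compl_compl Q ▸ hs' hs⟩

/-- The abscissae `t` of the vertical lines on which `Q` is null between some thick point `(t, a)`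
at scale `δ` and the height `c ≥ a + δ`. -/
def voidColumns (Q : Set (ℝ × ℝ)) (δ c : ℝ) : Set ℝ :=
  {t | ∃ a, (t, a) ∈ thickPointsAt Q δ ∧ a + δ ≤ c ∧ ∀ᵐ s, s ∈ Ioo a c → (t, s) ∉ Q}

/- Let `(t₁, a₁)` be an almost highest thick point over an interval of length `2 * r`. All nearby
void columns miss `Q` between the heights `a₁ + r` and `a₁ + 2 * r`, and these segments lie in the
square of radius `2 * r` around `(t₁, a₁)`, which `Q` nearly fills. -/
lemma volume_voidColumns_inter_closedBall_le (hQ : MeasurableSet Q) {δ c r : ℝ} (hr : 0 < r)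
    (hrδ : 2 * r < δ) (t₀ : ℝ) :
    volume (voidColumns Q δ c ∩ closedBall t₀ r) ≤ ENNReal.ofReal (r / 2) := by
  set S := voidColumns Q δ c ∩ closedBall t₀ r
  rcases S.eq_empty_or_nonempty with hS | hS
  · simp [hS]
  choose! a hthick hac hvoid using fun t (ht : t ∈ S) ↦ ht.1
  have hbdd : BddAbove (a '' S) := ⟨c, forall_mem_image.2 fun t ht ↦ by linarith [hac t ht]⟩
  obtain ⟨_, ⟨t₁, ht₁, rfl⟩, htop⟩ := exists_lt_of_lt_csSup (hS.image a) (sub_lt_self _ hr)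
  set I := Ioo (a t₁ + r) (a t₁ + 2 * r)
  have hW : MeasurableSet ((closedBall t₀ r ×ˢ I) \ Q) :=
    (measurableSet_closedBall.prod measurableSet_Ioo).diff hQ
  have hsub : closedBall t₀ r ×ˢ I ⊆ closedBall (t₁, a t₁) (2 * r) := by
    rw [← closedBall_prod_same]
    refine prod_mono (closedBall_subset_closedBall' ?_) fun s hs ↦ ?_
    · linarith [mem_closedBall'.1 ht₁.2]
    · rw [Real.closedBall_eq_Icc]
      exact ⟨by linarith [hs.1], hs.2.le⟩
  have hcolumn (t : ℝ) (ht : t ∈ S) :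
      ENNReal.ofReal r ≤ volume (Prod.mk t ⁻¹' ((closedBall t₀ r ×ˢ I) \ Q)) := by
    have hI : volume I = ENNReal.ofReal r := by rw [Real.volume_Ioo]; ring_nf
    rw [← hI]
    refine measure_mono_ae ?_
    filter_upwards [hvoid t ht] with s hs hsI
    have hle : a t ≤ sSup (a '' S) := le_csSup hbdd (mem_image_of_mem a ht)
    exact ⟨⟨ht.2, hsI⟩, hs ⟨by linarith [hsI.1], by linarith [hsI.2, hac t₁ ht₁]⟩⟩
  have hmul : ENNReal.ofReal r * volume S ≤ ENNReal.ofReal r * ENNReal.ofReal (r / 2) :=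
    calc ENNReal.ofReal r * volume S
        ≤ volume ((closedBall t₀ r ×ˢ I) \ Q) := mul_measure_le_measure_prod hW hcolumn
      _ ≤ volume (closedBall (t₁, a t₁) (2 * r) \ Q) :=
          measure_mono (sdiff_subset_sdiff_left hsub)
      _ ≤ ENNReal.ofReal ((2 * r) ^ 2 / 8) := hthick t₁ ht₁ _ ⟨by positivity, hrδ⟩
      _ = ENNReal.ofReal r * ENNReal.ofReal (r / 2) := by
          rw [← ENNReal.ofReal_mul hr.le]
          ring_nf
  exact (ENNReal.mul_le_mul_iff_right (by simpa using hr) ENNReal.ofReal_ne_top).1 hmul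

lemma volume_voidColumns (hQ : MeasurableSet Q) {δ : ℝ} (hδ : 0 < δ) (c : ℝ) :
    volume (voidColumns Q δ c) = 0 := by
  refine measure_eq_zero_of_frequently_inter_closedBall_le (θ := ENNReal.ofReal (1 / 4))
    (by norm_num) fun t _ ↦ Eventually.frequently ?_
  filter_upwards [Ioo_mem_nhdsGT (half_pos hδ)] with r hr
  refine (volume_voidColumns_inter_closedBall_le hQ hr.1 (by linarith [hr.2]) t).trans_eq ?_
  rw [Real.volume_closedBall, ← ENNReal.ofReal_mul (by norm_num)]
  ring_nf

lemma ae_frequently_nhdsGT_mem_of_mem_thickPoints (hQ : MeasurableSet Q) :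
    ∀ᵐ t : ℝ, ∀ a, (t, a) ∈ thickPoints Q → ∃ᶠ s in 𝓝[>] a ⊓ ae volume, (t, s) ∈ Q := by
  have hnotMem : ∀ᵐ t : ℝ, ∀ (n : ℕ) (c : ℚ), t ∉ voidColumns Q (1 / (n + 1)) c := by
    simp only [ae_all_iff, ← measure_eq_zero_iff_ae_notMem]
    exact fun n c ↦ volume_voidColumns hQ Nat.one_div_pos_of_nat c
  filter_upwards [hnotMem] with t ht a ha hnull
  obtain ⟨δ, hδ, ha⟩ := mem_thickPoints_iff.1 ha
  obtain ⟨U, hU, V, hV, hUV⟩ := mem_inf_iff_superset.1 hnull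
  obtain ⟨y, hay : a < y, hyU⟩ := mem_nhdsGT_iff_exists_Ioo_subset.1 hU
  obtain ⟨c, hac, hcy⟩ := exists_rat_btwn hay
  obtain ⟨n, hn⟩ := exists_nat_one_div_lt (lt_min hδ (sub_pos.2 hac))
  obtain ⟨hnδ, hnc⟩ := lt_min_iff.1 hn
  refine ht n c ⟨a, thickPointsAt_anti hnδ.le ha, by linarith, ?_⟩
  filter_upwards [hV] with s hs hsI using hUV ⟨hyU ⟨hsI.1, hsI.2.trans hcy⟩, hs⟩

lemma thickPoints_preimage {f : ℝ × ℝ → ℝ × ℝ} (hf : Isometry f) (hf' : MeasurePreserving f)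
    (hQ : MeasurableSet Q) : thickPoints (f ⁻¹' Q) = f ⁻¹' thickPoints Q := by
  ext z
  have hvol (r : ℝ) : volume (closedBall z r \ f ⁻¹' Q) = volume (closedBall (f z) r \ Q) := by
    rw [← hf.preimage_closedBall, ← preimage_sdiff,
      hf'.measure_preimage (measurableSet_closedBall.diff hQ).nullMeasurableSet]
  simp only [thickPoints, mem_preimage, mem_ofPred_eq, hvol]

lemma ae_frequently_nhdsLT_mem_of_mem_thickPoints (hQ : MeasurableSet Q) :
    ∀ᵐ t : ℝ, ∀ a, (t, a) ∈ thickPoints Q → ∃ᶠ s in 𝓝[<] a ⊓ ae volume, (t, s) ∈ Q := by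
  let f : ℝ × ℝ → ℝ × ℝ := Prod.map id Neg.neg
  have hf : MeasurePreserving f :=
    (MeasurePreserving.id volume).prod (Measure.measurePreserving_neg volume)
  have hf' : Isometry f := isometry_id.prodMap (IsometryEquiv.neg ℝ).isometry
  filter_upwards [ae_frequently_nhdsGT_mem_of_mem_thickPoints (hf.measurable hQ)] with t ht a ha
  have hfreq := ht (-a) (by rw [thickPoints_preimage hf' hf hQ]; simpa [f] using ha)
  have hneg : Tendsto Neg.neg (𝓝[>] (-a) ⊓ ae volume) (𝓝[<] a ⊓ ae volume) :=
    tendsto_neg_nhdsGT_neg.inf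
      (Measure.measurePreserving_neg volume).quasiMeasurePreserving.tendsto_ae
  exact hneg.frequently hfreq

lemma ae_notMem_nhdsGT_nhdsLT_of_mem_thickPoints (hQ : MeasurableSet Q) :
    ∀ᵐ t : ℝ, ∀ a, (t, a) ∈ thickPoints Q →
      ¬ (Prod.mk t ⁻¹' thickPoints Qᶜ ∈ 𝓝[>] a ∨ Prod.mk t ⁻¹' thickPoints Qᶜ ∈ 𝓝[<] a) := by
  filter_upwards [ae_frequently_nhdsGT_mem_of_mem_thickPoints hQ,
    ae_frequently_nhdsLT_mem_of_mem_thickPoints hQ, ae_ae_notMem_thickPoints_compl Q]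
    with t hGT hLT hae a ha
  have notMem {l : Filter ℝ} (hl : ∃ᶠ s in l ⊓ ae volume, (t, s) ∈ Q) :
      Prod.mk t ⁻¹' thickPoints Qᶜ ∉ l := fun h ↦
    hl <| by
      filter_upwards [hae.filter_mono inf_le_right, mem_inf_of_left h] with s hs hs' hsQ
        using hs hsQ hs'
  exact not_or.2 ⟨notMem (hGT a ha), notMem (hLT a ha)⟩

theorem ae_forall_mem_thickPoints_or_compl (hQ : MeasurableSet Q) :
    ∀ᵐ t : ℝ, (∀ s, (t, s) ∈ thickPoints Q ∪ thickPoints Qᶜ) →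
      (∀ s, (t, s) ∈ thickPoints Q) ∨ ∀ s, (t, s) ∈ thickPoints Qᶜ := by
  filter_upwards [ae_notMem_nhdsGT_nhdsLT_of_mem_thickPoints hQ,
    ae_notMem_nhdsGT_nhdsLT_of_mem_thickPoints hQ.compl] with t h h' hcover
  set A : Set ℝ := Prod.mk t ⁻¹' thickPoints Q
  have hA : Aᶜ = Prod.mk t ⁻¹' thickPoints Qᶜ := by
    ext s
    exact ⟨(hcover s).resolve_left, fun hs hs' ↦
      disjoint_left.1 (disjoint_thickPoints_compl Q) hs' hs⟩
  have isGδ_compl (R : Set (ℝ × ℝ)) : IsGδ (Prod.mk t ⁻¹' thickPoints R)ᶜ :=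
    (isGδ_compl_thickPoints R).preimage (Continuous.prodMk_right t)
  have hGδ : IsGδ A := by rw [← compl_compl A, hA]; exact isGδ_compl Qᶜ
  by_contra! hmixed
  obtain ⟨⟨s, hs⟩, s', hs'⟩ := hmixed
  have hfrontier : (frontier A).Nonempty :=
    nonempty_frontier_iff.2
      ⟨⟨s', (hcover s').resolve_right hs'⟩, (ne_univ_iff_exists_notMem A).2 ⟨s, hs⟩⟩
  rw [← hA] at h
  rw [compl_compl] at h'
  rcases exists_compl_mem_nhdsGT_or_nhdsLT_of_isGδ hGδ (isGδ_compl Q) hfrontier with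
    ⟨a, ha, hside⟩ | ⟨a, ha, hside⟩
  · exact h a ha hside
  · exact h' a (hA.subset ha) hside

end ThickPoints

section EssentialBoundary

/-- `P` has density `d` at the point `x`. -/
def HasDensity (P : Set E2) (x : E2) (d : ℝ) : Prop :=
  Tendsto (ballDensity P x) (𝓝[>] 0) (𝓝 d)

variable {P S U A : Set E2} {x : E2} {d : ℝ}

lemma notMem_essentialBoundary_iff :
    x ∉ essentialBoundary P ↔ HasDensity P x 0 ∨ HasDensity P x 1 := by
  simp only [essentialBoundary, HasDensity, mem_ofPred_eq, not_and_or, not_not]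

lemma volume_inter_ball_ne_top (P : Set E2) (x : E2) (r : ℝ) : volume (P ∩ ball x r) ≠ ∞ :=
  measure_ne_top_of_subset inter_subset_right measure_ball_lt_top.ne

lemma toReal_volume_ball_pos (x : E2) {r : ℝ} (hr : 0 < r) : 0 < (volume (ball x r)).toReal :=
  ENNReal.toReal_pos (measure_ball_pos volume x hr).ne' measure_ball_lt_top.ne

lemma hasDensity_empty (x : E2) : HasDensity ∅ x 0 :=
  tendsto_const_nhds.congr fun r ↦ by simp [ballDensity]

lemma HasDensity.zero_mono (hP : HasDensity P x 0) (hSP : S ⊆ P) : HasDensity S x 0 := by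
  refine squeeze_zero (fun r ↦ by unfold ballDensity; positivity) (fun r ↦ ?_) hP
  unfold ballDensity
  gcongr
  exact volume_inter_ball_ne_top P x r

lemma HasDensity.compl (hP : MeasurableSet P) (h : HasDensity P x d) :
    HasDensity Pᶜ x (1 - d) := by
  refine (tendsto_const_nhds.sub h).congr' ?_
  filter_upwards [self_mem_nhdsWithin] with r hr
  have hball := toReal_volume_ball_pos x hr
  have hadd : (volume (P ∩ ball x r)).toReal + (volume (Pᶜ ∩ ball x r)).toReal =
      (volume (ball x r)).toReal := by
    rw [← ENNReal.toReal_add (volume_inter_ball_ne_top _ _ _) (volume_inter_ball_ne_top _ _ _),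
      inter_comm P, inter_comm Pᶜ, ← sdiff_eq, measure_inter_add_sdiff _ hP]
  rw [ballDensity, ballDensity, eq_div_iff hball.ne', sub_mul, div_mul_cancel₀ _ hball.ne']
  linarith

lemma hasDensity_congr (hU : U ∈ 𝓝 x) (h : P ∩ U = S ∩ U) :
    HasDensity P x d ↔ HasDensity S x d := by
  obtain ⟨ε, hε, hεU⟩ := Metric.mem_nhds_iff.1 hU
  refine tendsto_congr' ?_
  filter_upwards [Ioo_mem_nhdsGT hε] with r hr
  have hrU : ball x r ⊆ U := (ball_subset_ball hr.2.le).trans hεU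
  have heq : P ∩ ball x r = S ∩ ball x r := by
    rw [← inter_eq_self_of_subset_right hrU, ← inter_assoc, ← inter_assoc, h]
  rw [ballDensity, ballDensity, heq]

lemma mem_essentialBoundary_congr (hU : U ∈ 𝓝 x) (h : P ∩ U = S ∩ U) :
    x ∈ essentialBoundary P ↔ x ∈ essentialBoundary S :=
  not_iff_not.1 <| by
    simp only [notMem_essentialBoundary_iff, hasDensity_congr hU h]

lemma essentialBoundary_inter_of_hasDensity_zero (h : ∀ x ∈ frontier A, HasDensity P x 0) :
    essentialBoundary (P ∩ A) = essentialBoundary P ∩ A := by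
  ext x
  by_cases hxA : A ∈ 𝓝 x
  · rw [mem_essentialBoundary_congr hxA (S := P) (by simp [inter_assoc])]
    simp [mem_of_mem_nhds hxA]
  by_cases hxA' : Aᶜ ∈ 𝓝 x
  · rw [mem_essentialBoundary_congr hxA' (S := ∅) (by simp [inter_assoc])]
    have hempty := notMem_essentialBoundary_iff.2 (.inl (hasDensity_empty x))
    simp [hempty, show x ∉ A from mem_of_mem_nhds hxA']
  · have hx : HasDensity P x 0 := h x <| by
      rw [frontier_eq_closure_inter_closure, closure_eq_compl_interior_compl,
        closure_eq_compl_interior_compl, compl_compl]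
      exact ⟨mt mem_interior_iff_mem_nhds.1 hxA', mt mem_interior_iff_mem_nhds.1 hxA⟩
    have hP := notMem_essentialBoundary_iff.2 (.inl hx)
    have hPA := notMem_essentialBoundary_iff.2 (.inl (hx.zero_mono (inter_subset_left (t := A))))
    simp [hP, hPA]

lemma Indecomposable.volume_eq_zero_or (hind : Indecomposable P) (hP : MeasurableSet P)
    (hA : MeasurableSet A) (h : ∀ x ∈ frontier A, HasDensity P x 0) :
    volume (P ∩ A) = 0 ∨ volume (P ∩ Aᶜ) = 0 := by
  by_contra! hpos
  refine hind ⟨P ∩ A, P ∩ Aᶜ, hP.inter hA, hP.inter hA.compl, (inter_union_compl P A).symm, ?_,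
    pos_iff_ne_zero.2 hpos.1, pos_iff_ne_zero.2 hpos.2, ?_⟩
  · rw [← inter_inter_distrib_left, inter_compl_self, inter_empty]
  · rw [essentialBoundary_inter_of_hasDensity_zero h,
      essentialBoundary_inter_of_hasDensity_zero (by rwa [frontier_compl]), ← sdiff_eq,
      measure_inter_add_sdiff _ hA]

end EssentialBoundary

section Coordinates

/-- The coordinates of a point of the plane in the orthonormal basis `b`, as an element of `ℝ × ℝ`,
where Fubini's theorem applies. -/
def planeCoords (b : OrthonormalBasis (Fin 2) ℝ E2) : E2 ≃ᵐ ℝ × ℝ :=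
  (b.measurableEquiv.trans (MeasurableEquiv.toLp 2 (Fin 2 → ℝ)).symm).trans
    MeasurableEquiv.finTwoArrow

variable (b : OrthonormalBasis (Fin 2) ℝ E2) {P : Set E2}

lemma planeCoords_apply (x : E2) : planeCoords b x = (inner ℝ (b 0) x, inner ℝ (b 1) x) := by
  rw [← b.repr_apply_apply, ← b.repr_apply_apply]
  rfl

lemma measurePreserving_planeCoords : MeasurePreserving (planeCoords b) :=
  (volume_preserving_finTwoArrow ℝ).comp
    ((PiLp.volume_preserving_ofLp (Fin 2)).comp b.measurePreserving_measurableEquiv)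

lemma dist_le_sqrt_two_mul_dist_planeCoords (x y : E2) :
    dist x y ≤ √2 * dist (planeCoords b x) (planeCoords b y) := by
  rw [planeCoords_apply, planeCoords_apply, ← b.repr_apply_apply, ← b.repr_apply_apply,
    ← b.repr_apply_apply, ← b.repr_apply_apply, ← b.repr.dist_map, EuclideanSpace.dist_eq]
  refine Real.sqrt_le_iff.2 ⟨by positivity, ?_⟩
  rw [mul_pow, Real.sq_sqrt zero_le_two, Fin.sum_univ_two, two_mul]
  gcongr
  · exact le_max_left _ _
  · exact le_max_right _ _

lemma eventually_volume_inter_ball_le_of_hasDensity_zero {x : E2} (h : HasDensity P x 0)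
    {ε : ℝ} (hε : 0 < ε) :
    ∀ᶠ r in 𝓝[>] 0, volume (P ∩ ball x r) ≤ ENNReal.ofReal (ε * r ^ 2) := by
  filter_upwards [h.eventually_lt_const (show 0 < ε / Real.pi by positivity), self_mem_nhdsWithin]
    with r hlt (hr : 0 < r)
  rw [ballDensity, div_lt_iff₀ (toReal_volume_ball_pos x hr),
    EuclideanSpace.volume_ball_fin_two] at hlt
  refine (ENNReal.le_ofReal_iff_toReal_le (volume_inter_ball_ne_top _ _ _) (by positivity)).2 ?_
  calc (volume (P ∩ ball x r)).toReal
      ≤ ε / Real.pi * (r ^ 2 * Real.pi) := by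
        simpa [hr.le, Real.pi_pos.le] using hlt.le
    _ = ε * r ^ 2 := by field_simp

lemma planeCoords_mem_thickPoints_of_hasDensity_zero {x : E2} (h : HasDensity P x 0) :
    planeCoords b x ∈ thickPoints ((planeCoords b).symm ⁻¹' P)ᶜ := by
  have hdouble : Tendsto (fun r : ℝ ↦ 2 * r) (𝓝[>] 0) (𝓝[>] 0) := by
    refine tendsto_nhdsWithin_iff.2 ⟨?_, ?_⟩
    · exact (Continuous.tendsto' (by fun_prop) 0 0 (mul_zero 2)).mono_left nhdsWithin_le_nhds
    · filter_upwards [self_mem_nhdsWithin] with r (hr : 0 < r) using mul_pos two_pos hr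
  filter_upwards [hdouble.eventually (eventually_volume_inter_ball_le_of_hasDensity_zero h
    (show (0 : ℝ) < 1 / 32 by norm_num)), self_mem_nhdsWithin] with r hle (hr : 0 < r)
  have hsub : closedBall (planeCoords b x) r \ ((planeCoords b).symm ⁻¹' P)ᶜ ⊆
      (planeCoords b).symm ⁻¹' (P ∩ ball x (2 * r)) := by
    rintro z ⟨hz, hzP⟩
    refine ⟨not_not.1 hzP, ?_⟩
    calc dist ((planeCoords b).symm z) x
        ≤ √2 * dist z (planeCoords b x) := by
          simpa using dist_le_sqrt_two_mul_dist_planeCoords b ((planeCoords b).symm z) x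
      _ ≤ √2 * r := by gcongr; exact hz
      _ < 2 * r := by gcongr; exact (Real.sqrt_lt' two_pos).2 (by norm_num)
  calc volume (closedBall (planeCoords b x) r \ ((planeCoords b).symm ⁻¹' P)ᶜ)
      ≤ volume ((planeCoords b).symm ⁻¹' (P ∩ ball x (2 * r))) := measure_mono hsub
    _ = volume (P ∩ ball x (2 * r)) :=
        (measurePreserving_planeCoords b).symm.measure_preimage_equiv _
    _ ≤ ENNReal.ofReal (1 / 32 * (2 * r) ^ 2) := hle
    _ = ENNReal.ofReal (r ^ 2 / 8) := by ring_nf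

lemma planeCoords_mem_thickPoints_of_hasDensity_one (hP : MeasurableSet P) {x : E2}
    (h : HasDensity P x 1) : planeCoords b x ∈ thickPoints ((planeCoords b).symm ⁻¹' P) := by
  have hcompl : HasDensity Pᶜ x 0 := by simpa using h.compl hP
  simpa using planeCoords_mem_thickPoints_of_hasDensity_zero b hcompl

end Coordinates

section Projection

variable {P : Set E2}

lemma exists_orthonormalBasis_zero_eq {e : E2} (he : ‖e‖ = 1) :
    ∃ b : OrthonormalBasis (Fin 2) ℝ E2, b 0 = e := by
  obtain ⟨b, hb⟩ := Orthonormal.exists_orthonormalBasis_extension_of_card_eq (𝕜 := ℝ) (E := E2)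
    (by simp) (v := fun _ : Fin 2 ↦ e) (s := {0})
    ⟨fun _ ↦ he, fun i j hij ↦ absurd (Subsingleton.elim i j) hij⟩
  exact ⟨b, hb 0 rfl⟩

lemma ae_hasDensity_zero_of_notMem_image_inner (hP : MeasurableSet P) (hvol : volume P ≠ ∞)
    {e : E2} (he : ‖e‖ = 1) :
    ∀ᵐ t : ℝ, t ∉ inner ℝ e '' essentialBoundary P → ∀ x, inner ℝ e x = t → HasDensity P x 0 := by
  obtain ⟨b, rfl⟩ := exists_orthonormalBasis_zero_eq he
  set Q := (planeCoords b).symm ⁻¹' P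
  have hQ : MeasurableSet Q := (planeCoords b).symm.measurable hP
  have hQvol : volume Q ≠ ∞ := by
    rwa [(measurePreserving_planeCoords b).symm.measure_preimage_equiv]
  filter_upwards [ae_forall_mem_thickPoints_or_compl hQ, ae_exists_notMem_thickPoints hQ hQvol]
    with t hconst ⟨s, hs⟩ ht
  have hdichotomy (x : E2) (hx : inner ℝ (b 0) x = t) : HasDensity P x 0 ∨ HasDensity P x 1 :=
    notMem_essentialBoundary_iff.1 fun hxP ↦ ht ⟨x, hxP, hx⟩
  have hcover (u : ℝ) : (t, u) ∈ thickPoints Q ∪ thickPoints Qᶜ := by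
    obtain ⟨x, hx⟩ := (planeCoords b).surjective (t, u)
    have hxt : inner ℝ (b 0) x = t := congrArg Prod.fst ((planeCoords_apply b x).symm.trans hx)
    rw [← hx]
    exact (hdichotomy x hxt).symm.imp (planeCoords_mem_thickPoints_of_hasDensity_one b hP)
      (planeCoords_mem_thickPoints_of_hasDensity_zero b)
  have hthin : ∀ u, (t, u) ∈ thickPoints Qᶜ := (hconst hcover).resolve_left fun h ↦ hs (h s)
  refine fun x hx ↦ (hdichotomy x hx).resolve_right fun hone ↦ ?_
  have hcoords : planeCoords b x ∈ thickPoints Qᶜ := by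
    rw [planeCoords_apply, hx]
    exact hthin _
  exact disjoint_left.1 (disjoint_thickPoints_compl Q)
    (planeCoords_mem_thickPoints_of_hasDensity_one b hP hone) hcoords

lemma Indecomposable.ae_mem_image_inner (hind : Indecomposable P) (hP : MeasurableSet P)
    (hvol : volume P ≠ ∞) {e x y : E2} (he : ‖e‖ = 1) (hx : x ∈ (volume.restrict P).support)
    (hy : y ∈ (volume.restrict P).support) :
    ∀ᵐ t : ℝ, t ∈ Ioo (inner ℝ e x) (inner ℝ e y) → t ∈ inner ℝ e '' essentialBoundary P := by
  filter_upwards [ae_hasDensity_zero_of_notMem_image_inner hP hvol he] with t ht htI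
  by_contra htP
  have hcont : Continuous (inner ℝ e : E2 → ℝ) := by fun_prop
  have pos {z : E2} (hz : z ∈ (volume.restrict P).support) {U : Set E2} (hU : IsOpen U)
      (hzU : z ∈ U) : volume (P ∩ U) ≠ 0 := by
    rw [inter_comm, ← Measure.restrict_apply hU.measurableSet]
    exact (Measure.mem_support_iff_forall z |>.1 hz U (hU.mem_nhds hzU)).ne'
  have hA : IsOpen {z : E2 | inner ℝ e z < t} := isOpen_lt hcont continuous_const
  have hB : IsOpen {z : E2 | t < inner ℝ e z} := isOpen_lt continuous_const hcont
  rcases hind.volume_eq_zero_or hP hA.measurableSet fun z hz ↦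
    ht htP z (frontier_lt_subset_eq hcont continuous_const hz) with h | h
  · exact pos hx hA htI.1 h
  · exact pos hy hB htI.2 (measure_mono_null
      (inter_subset_inter_right P fun z (hz : t < inner ℝ e z) ↦ not_lt.2 hz.le) h)

lemma volume_image_inner_le {E : Type*} [NormedAddCommGroup E] [InnerProductSpace ℝ E]
    [MeasurableSpace E] [BorelSpace E] {e : E} (he : ‖e‖ ≤ 1) (S : Set E) :
    volume (inner ℝ e '' S) ≤ μH[1] S := by
  have hlip : LipschitzWith 1 (inner ℝ e) :=
    (innerSL ℝ e).lipschitz.weaken (by simpa [← NNReal.coe_le_coe] using he)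
  rw [← hausdorffMeasure_real]
  simpa using hlip.hausdorffMeasure_image_le zero_le_one S

theorem Indecomposable.ediam_support_le (hind : Indecomposable P) (hP : MeasurableSet P)
    (hvol : volume P ≠ ∞) :
    ediam (volume.restrict P).support ≤ μH[1] (essentialBoundary P) := by
  refine ediam_le fun x hx y hy ↦ ?_
  rcases eq_or_ne x y with rfl | hxy
  · simp
  set e := NormedSpace.normalize (y - x)
  have he : ‖e‖ = 1 := NormedSpace.norm_normalize (sub_ne_zero.2 hxy.symm)
  have hdist : inner ℝ e y - inner ℝ e x = dist x y :=
    calc inner ℝ e y - inner ℝ e x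
        = inner ℝ e (‖y - x‖ • e) := by rw [← inner_sub_right, NormedSpace.norm_smul_normalize]
      _ = dist x y := by
        rw [real_inner_smul_right, real_inner_self_eq_norm_sq, he, one_pow, mul_one, dist_comm,
          dist_eq_norm]
  calc edist x y = volume (Ioo (inner ℝ e x) (inner ℝ e y)) := by
        rw [Real.volume_Ioo, hdist, edist_dist]
    _ ≤ volume (inner ℝ e '' essentialBoundary P) :=
        measure_mono_ae (hind.ae_mem_image_inner hP hvol he hx hy)
    _ ≤ μH[1] (essentialBoundary P) := volume_image_inner_le he.le _

lemma ofReal_essDiam_le_ediam {S : Set E2} (h : volume (P \ S) = 0) :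
    ENNReal.ofReal (essDiam P) ≤ ediam S := by
  rcases eq_or_ne (ediam S) ∞ with hS | hS
  · simp [hS]
  refine ENNReal.ofReal_le_of_le_toReal (csInf_le ⟨0, fun _ hd ↦ hd.1⟩ ?_)
  refine ⟨ENNReal.toReal_nonneg, P \ S, h, fun x hx y hy ↦ ?_⟩
  rw [sdiff_sdiff_right_self] at hx hy
  exact dist_le_diam_of_mem' hS hx.2 hy.2

end Projection

theorem essDiam_le_perimeter_general (P : Set E2) (hmeas : MeasurableSet P)
    (hvol : volume P ≠ ∞) (hind : Indecomposable P) :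
    ENNReal.ofReal (essDiam P) ≤ μH[1] (essentialBoundary P) := by
  have hnull : volume (P \ (volume.restrict P).support) = 0 := by
    rw [sdiff_eq, inter_comm, ← Measure.restrict_apply' hmeas]
    exact Measure.measure_compl_support
  exact (ofReal_essDiam_le_ediam hnull).trans (hind.ediam_support_le hmeas hvol)

/-- A bounded indecomposable set of finite perimeter in the plane has essential diameter
bounded by the `H¹`-measure of its essential boundary. -/
theorem essDiam_le_perimeter (P : Set E2)
    (hmeas : MeasurableSet P) (hbdd : Bornology.IsBounded P)
    (hfin : μH[1] (essentialBoundary P) < ⊤)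
    (hind : Indecomposable P) :
    ENNReal.ofReal (essDiam P) ≤ μH[1] (essentialBoundary P) :=
  essDiam_le_perimeter_general P hmeas hbdd.measure_lt_top.ne hind
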